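/- For every complex number s with Re(s) > 1, the function φ_s(z) = ∑_{n=1}^{∞} α_n(z)/n^s is an exponential function in base ζ(s): there exists a complex number c with exp(c) = ζ(s) such that for every complex number z, ∑_{n=1}^{∞} α_n(z)/n^s = exp(z·c), where ζ denotes the Riemann zeta function. -/

import Mathlib

/-!
Fix `s` with `Re s > 1`. The Newton binomial series gives `∑ₖ [z;k] w ^ k = (1 - w) ^ (-z)` for
`‖w‖ < 1` (`hasSum_poch_mul_pow`). Since `n ↦ α_n(z)` is multiplicative, the Euler product turns
the Dirichlet series into `∏ₚ (1 - p ^ (-s)) ^ (-z)`, which is `exp (z * c)` for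
`c = ∑ₚ -log (1 - p ^ (-s))`, and `exp c = ζ(s)` is the usual Euler product.

Absolute convergence (`summable_alphaArith`) is needed for the Euler product. From
`‖α_n(z)‖ ≤ α_n(N + 1)` for an integer `N + 1 ≥ ‖z‖`, it reduces to positive integer
arguments, where the Pascal-type identity `∑_{j ≤ k} [z;j] = [z+1;k]` shows that `α(z + 1)` is the
Dirichlet convolution of `α(z)` with the constant function `1`; so summability follows by
induction on `N`.
-/

open Finset

/-- The Pochhammer polynomial `[z;k] = (1/k!) * ∏_{i=0}^{k-1} (z+i)`, with `[z;0] = 1`. -/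
noncomputable def poch (z : ℂ) (k : ℕ) : ℂ :=
  ((k.factorial : ℂ))⁻¹ * ∏ i ∈ Finset.range k, (z + i)

/-- The prime-signature polynomial `α_n(z) = ∏_{p^k ∥ n} [z;k]`, with `α_1(z) = 1`. -/
noncomputable def alphaSig (n : ℕ) (z : ℂ) : ℂ :=
  ∏ p ∈ n.primeFactors, poch z (n.factorization p)

@[simp]
lemma poch_zero_right (z : ℂ) : poch z 0 = 1 := by simp [poch]

lemma poch_succ (z : ℂ) (k : ℕ) : poch z (k + 1) = poch z k * (z + k) / (k + 1) := by
  have h : (k + 1 : ℂ) ≠ 0 := by exact_mod_cast k.succ_ne_zero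
  have h' : (k.factorial : ℂ) ≠ 0 := by exact_mod_cast k.factorial_ne_zero
  simp only [poch, Finset.prod_range_succ, Nat.factorial_succ]
  push_cast
  field_simp

lemma poch_one_left (k : ℕ) : poch 1 k = 1 := by
  induction k with
  | zero => simp
  | succ k ih =>
    have h : (k + 1 : ℂ) ≠ 0 := by exact_mod_cast k.succ_ne_zero
    rw [poch_succ, ih, one_mul, add_comm, div_self h]

lemma add_mul_poch (z : ℂ) (k : ℕ) : (z + k) * poch z k = z * poch (z + 1) k := by
  induction k with
  | zero => simp
  | succ k ih =>
    have h : (k + 1 : ℂ) ≠ 0 := by exact_mod_cast k.succ_ne_zero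
    rw [poch_succ, poch_succ]
    field_simp
    push_cast
    linear_combination (z + (k + 1)) * ih

/-- The Pascal rule `[z+1;k+1] = [z+1;k] + [z;k+1]`, iterated in the second argument. -/
lemma sum_poch (z : ℂ) (k : ℕ) : ∑ j ∈ Finset.range (k + 1), poch z j = poch (z + 1) k := by
  induction k with
  | zero => simp
  | succ k ih =>
    have h : (k + 1 : ℂ) ≠ 0 := by exact_mod_cast k.succ_ne_zero
    rw [Finset.sum_range_succ, ih, poch_succ z, poch_succ]
    field_simp
    linear_combination add_mul_poch z k

lemma norm_poch_le {z : ℂ} {N : ℕ} (h : ‖z‖ ≤ N) (k : ℕ) : ‖poch z k‖ ≤ ‖poch N k‖ := by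
  simp only [poch, norm_mul, norm_prod]
  gcongr with i
  calc ‖z + i‖ ≤ ‖z‖ + ‖(i : ℂ)‖ := norm_add_le _ _
    _ ≤ N + i := by simpa using h
    _ = ‖(N : ℂ) + i‖ := by exact_mod_cast (Complex.norm_natCast (N + i)).symm

lemma poch_eq_choose (z : ℂ) (k : ℕ) : poch z k = Ring.choose (z + k - 1) k := by
  rw [← Ring.multichoose_eq]
  have h := Ring.factorial_nsmul_multichoose_eq_ascPochhammer z k
  have h' : (k.factorial : ℂ) ≠ 0 := by exact_mod_cast k.factorial_ne_zero
  rw [Polynomial.ascPochhammer_smeval_eq_eval, nsmul_eq_mul] at h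
  have hp : (ascPochhammer ℂ k).eval z = ∏ i ∈ Finset.range k, (z + i) := by
    clear h h'
    induction k with
    | zero => simp
    | succ k ih => rw [ascPochhammer_succ_eval, ih, Finset.prod_range_succ]
  rw [poch, ← hp, ← h, inv_mul_cancel_left₀ h']

lemma hasSum_poch_mul_pow (z : ℂ) {w : ℂ} (hw : ‖w‖ < 1) :
    HasSum (fun k ↦ poch z k * w ^ k) (Complex.exp (z * -Complex.log (1 - w))) := by
  have h := (Complex.one_div_one_sub_cpow_hasFPowerSeriesOnBall_zero z).hasSum (y := w)
    (by simpa [enorm_eq_nnnorm, ← NNReal.coe_lt_coe] using hw)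
  have hne : 1 - w ≠ 0 := by
    intro h0
    rw [← sub_eq_zero.mp h0, norm_one] at hw
    exact lt_irrefl _ hw
  have he : Complex.exp (z * -Complex.log (1 - w)) = 1 / (1 - (0 + w)) ^ z := by
    rw [zero_add, Complex.cpow_def_of_ne_zero hne, one_div, ← Complex.exp_neg]
    congr 1
    ring
  rw [he]
  refine h.congr_fun ?_
  intro k
  simp [poch_eq_choose, FormalMultilinearSeries.ofScalars, mul_comm]

/-- The arithmetic function `n ↦ α_n(z)`, with the value at `0` changed from the empty product `1`
to `0`. -/
noncomputable def alphaArith (z : ℂ) : ArithmeticFunction ℂ :=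
  ⟨fun n ↦ if n = 0 then 0 else alphaSig n z, by simp⟩

lemma alphaArith_apply (z : ℂ) {n : ℕ} (hn : n ≠ 0) : alphaArith z n = alphaSig n z := by
  simp [alphaArith, hn]

lemma alphaArith_isMultiplicative (z : ℂ) : (alphaArith z).IsMultiplicative := by
  rw [ArithmeticFunction.IsMultiplicative.iff_ne_zero]
  refine ⟨by simp [alphaArith, alphaSig], fun {m n} hm hn hmn ↦ ?_⟩
  rw [alphaArith_apply z hm, alphaArith_apply z hn, alphaArith_apply z (mul_ne_zero hm hn)]
  simp only [alphaSig]
  rw [hmn.primeFactors_mul, Finset.prod_union hmn.disjoint_primeFactors]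
  congr 1 <;> refine Finset.prod_congr rfl fun p hp ↦ ?_
  · rw [Nat.factorization_eq_of_coprime_left hmn (by simpa using hp)]
  · rw [Nat.factorization_eq_of_coprime_right hmn (by simpa using hp)]

lemma alphaArith_prime_pow (z : ℂ) {p : ℕ} (hp : p.Prime) (k : ℕ) :
    alphaArith z (p ^ k) = poch z k := by
  rw [alphaArith_apply z (pow_ne_zero _ hp.ne_zero), alphaSig]
  rcases eq_or_ne k 0 with rfl | hk
  · simp
  · simp [Nat.primeFactors_prime_pow hk hp, hp.factorization_pow]

open scoped ArithmeticFunction.zeta in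
lemma alphaArith_mul_zeta (z : ℂ) :
    alphaArith z * (ζ : ArithmeticFunction ℂ) = alphaArith (z + 1) := by
  refine (ArithmeticFunction.IsMultiplicative.eq_iff_eq_on_prime_powers _
    ((alphaArith_isMultiplicative z).mul ArithmeticFunction.isMultiplicative_zeta.natCast) _
    (alphaArith_isMultiplicative _)).mpr fun p k hp ↦ ?_
  rw [ArithmeticFunction.coe_mul_zeta_apply, Nat.sum_divisors_prime_pow hp,
    alphaArith_prime_pow _ hp, ← sum_poch]
  exact Finset.sum_congr rfl fun j _ ↦ alphaArith_prime_pow z hp j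

lemma summable_alphaArith_nat {s : ℂ} (hs : 1 < s.re) (N : ℕ) :
    LSeriesSummable (alphaArith ((N + 1 : ℕ) : ℂ)) s := by
  induction N with
  | zero =>
    refine (LSeriesSummable_congr s fun {n} hn ↦ ?_).mpr (LSeriesSummable_one_iff.mpr hs)
    simp [alphaArith_apply _ hn, alphaSig, poch_one_left]
  | succ N ih =>
    have hcast : ((N + 1 + 1 : ℕ) : ℂ) = ((N + 1 : ℕ) : ℂ) + 1 := Nat.cast_succ _
    rw [hcast, ← alphaArith_mul_zeta]
    exact ArithmeticFunction.LSeriesSummable_mul ih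
      (ArithmeticFunction.LSeriesSummable_zeta_iff.mpr hs)

lemma summable_alphaArith {s : ℂ} (hs : 1 < s.re) (z : ℂ) :
    LSeriesSummable (alphaArith z) s := by
  have hN : ‖z‖ ≤ ((⌈‖z‖⌉₊ + 1 : ℕ) : ℝ) := by
    push_cast
    linarith [Nat.le_ceil ‖z‖]
  refine Summable.of_norm_bounded (summable_alphaArith_nat hs ⌈‖z‖⌉₊).norm fun n ↦ ?_
  refine LSeries.norm_term_le s ?_
  rcases eq_or_ne n 0 with rfl | hn
  · simp
  rw [alphaArith_apply z hn, alphaArith_apply _ hn, alphaSig, alphaSig, norm_prod, norm_prod]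
  gcongr with p
  exact norm_poch_le hN _

lemma norm_prime_cpow_neg_lt_one {s : ℂ} (hs : 1 < s.re) (p : Nat.Primes) :
    ‖(p : ℂ) ^ (-s)‖ < 1 := by
  rw [Complex.norm_natCast_cpow_of_pos p.prop.pos, Complex.neg_re]
  exact Real.rpow_lt_one_of_one_lt_of_neg (by exact_mod_cast p.prop.one_lt) (by linarith)

/-- The Euler product for `n ↦ α_n(z)`, with the local factors written as exponentials. -/
lemma hasProd_alphaArith {s : ℂ} (hs : 1 < s.re) (z : ℂ) :
    HasProd (fun p : Nat.Primes ↦ Complex.exp (z * -Complex.log (1 - (p : ℂ) ^ (-s))))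
      (LSeries (alphaArith z) s) := by
  have hmul := alphaArith_isMultiplicative z
  have h := EulerProduct.eulerProduct_hasProd (f := LSeries.term (alphaArith z) s)
    (by simp [LSeries.term, hmul.map_one])
    (fun {m n} hmn ↦ by
      rcases eq_or_ne m 0 with rfl | hm
      · simp
      rcases eq_or_ne n 0 with rfl | hn
      · simp
      rw [LSeries.term_of_ne_zero hm, LSeries.term_of_ne_zero hn,
        LSeries.term_of_ne_zero (mul_ne_zero hm hn), hmul.map_mul_of_coprime hmn,
        Nat.cast_mul, Complex.natCast_mul_natCast_cpow, mul_div_mul_comm])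
    (summable_alphaArith hs z).norm (by simp)
  refine h.congr_fun ?_
  intro p
  rw [← (hasSum_poch_mul_pow z (norm_prime_cpow_neg_lt_one hs p)).tsum_eq]
  refine tsum_congr fun k ↦ ?_
  rw [LSeries.term_of_ne_zero (pow_ne_zero _ p.prop.ne_zero), alphaArith_prime_pow z p.prop,
    Complex.cpow_neg, div_eq_mul_inv, inv_pow, Nat.cast_pow, ← Complex.natCast_cpow_natCast_mul,
    Complex.cpow_nat_mul]

theorem alphaSig_dirichlet_zeta_pow (s : ℂ) (hs : 1 < s.re) :
    ∃ c : ℂ, Complex.exp c = riemannZeta s ∧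
      ∀ z : ℂ, ∑' n : ℕ, alphaSig (n + 1) z / ((n : ℂ) + 1) ^ s = Complex.exp (z * c) := by
  refine ⟨∑' p : Nat.Primes, -Complex.log (1 - (p : ℂ) ^ (-s)),
    riemannZeta_eulerProduct_exp_log hs, fun z ↦ ?_⟩
  have hlog : Summable fun p : Nat.Primes ↦ -Complex.log (1 - (p : ℂ) ^ (-s)) :=
    (summable_riemannZetaSummand hs).of_norm.clog_one_sub.neg.subtype Nat.Prime
  have h := (hlog.hasSum.mul_left z).cexp.unique (hasProd_alphaArith hs z)
  rw [h, LSeries, (summable_alphaArith hs z).tsum_eq_zero_add, LSeries.term_zero, zero_add]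
  refine tsum_congr fun n ↦ ?_
  rw [LSeries.term_of_ne_zero n.succ_ne_zero, alphaArith_apply z n.succ_ne_zero]
  push_cast
  rfl
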